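/- Let G = Matrix.fromBlocks a b c d be a (1+n)×(1+n) quaternionic block matrix (a ∈ ℍ, b, c : Fin n → ℍ, d an n×n quaternionic matrix) with det (τ(G)) = 1, and let q : Fin n → ℍ satisfy a + b⬝q ≠ 0. Then the map F : (Fin n → ℍ) → (Fin n → ℍ), F(w) = fun i => (c i + Σⱼ d i j * w j) * (a + b⬝w)⁻¹, is ℝ-differentiable at q, and the determinant of its real Fréchet derivative (as an ℝ-linear endomorphism of Fin n → ℍ) equals (Quaternion.normSq (a + b⬝q))^(−(2n+2)), i.e. LinearMap.det ((fderiv ℝ F q).toLinearMap) = ((Quaternion.normSq (a + b⬝q) : ℝ))⁻¹ ^ (2n+2). (This expresses that the pullback of the standard volume form of ℝ^{4n} under the quaternionic fractional linear transformation is |a + b⬝q|^{−(4n+4)} times the volume form.) -/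

import Mathlib

/-!
Put `p = a + b⬝q` and let `y = (c + d q) p⁻¹` be the image of `q`. Differentiating the product
with the noncommutative rule for the inverse gives the derivative `h ↦ (d - y b) h p⁻¹`
(`hasFDerivAt_qflt`), a left multiplication by a quaternionic matrix followed by a right
multiplication by a quaternion.

Left multiplication by `M` on `ℍⁿ` becomes multiplication by `τ(M)` on `ℂ²ⁿ`, so its real
determinant is `|det τ(M)|²` (`det_leftMul`). Right multiplication by `x` is conjugate to left
multiplication by `star x`, so its real determinant is `(normSq x)^(2n)` (`det_rightMul`).

Block elimination gives `det τ(G) = normSq p * det τ(d - y b)` (`det_tau_fromBlocks`). Since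
`det τ(G) = 1`, the first factor contributes `(normSq p)⁻²` and the second `(normSq p)^(-2n)`.
-/

/-- The complex 2×2 matrix representing a quaternion `x = x₁ + x₂ i + x₃ j + x₄ k`. -/
noncomputable def tauEntry (x : Quaternion ℝ) : Matrix (Fin 2) (Fin 2) ℂ :=
  !![(x.re : ℂ) - (x.imI : ℂ) * Complex.I, -(x.imJ : ℂ) + (x.imK : ℂ) * Complex.I;
     (x.imJ : ℂ) + (x.imK : ℂ) * Complex.I, (x.re : ℂ) + (x.imI : ℂ) * Complex.I]

/-- The complexification `τ` of a quaternionic matrix. -/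
noncomputable def tau {ι κ : Type*} (a : Matrix ι κ (Quaternion ℝ)) :
    Matrix (ι × Fin 2) (κ × Fin 2) ℂ :=
  Matrix.of fun r s => tauEntry (a r.1 s.1) r.2 s.2

/-- A quaternion viewed as a 1×1 quaternionic matrix. -/
def scal (a : Quaternion ℝ) : Matrix (Fin 1) (Fin 1) (Quaternion ℝ) :=
  Matrix.of fun _ _ => a

/-- A quaternionic vector viewed as a 1×n row matrix. -/
def rowOf {n : ℕ} (b : Fin n → Quaternion ℝ) : Matrix (Fin 1) (Fin n) (Quaternion ℝ) :=
  Matrix.of fun _ j => b j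

/-- A quaternionic vector viewed as an n×1 column matrix. -/
def colOf {n : ℕ} (c : Fin n → Quaternion ℝ) : Matrix (Fin n) (Fin 1) (Quaternion ℝ) :=
  Matrix.of fun i _ => c i

/-- The quaternionic fractional linear transformation
`G.w = fun i => (c i + ∑ j, d i j * w j) * (a + ∑ j, b j * w j)⁻¹`. -/
noncomputable def qflt {n : ℕ} (a : Quaternion ℝ) (b c : Fin n → Quaternion ℝ)
    (d : Matrix (Fin n) (Fin n) (Quaternion ℝ)) (w : Fin n → Quaternion ℝ) :
    Fin n → Quaternion ℝ :=
  fun i => (c i + ∑ j, d i j * w j) * (a + ∑ j, b j * w j)⁻¹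

theorem tauEntry_mul (x y : Quaternion ℝ) : tauEntry (x * y) = tauEntry x * tauEntry y := by
  ext i j
  fin_cases i <;> fin_cases j <;>
    simp [tauEntry, Matrix.mul_apply, Fin.sum_univ_two] <;> ring_nf <;> simp [Complex.I_sq] <;> ring

theorem tauEntry_add (x y : Quaternion ℝ) : tauEntry (x + y) = tauEntry x + tauEntry y := by
  ext i j
  fin_cases i <;> fin_cases j <;> simp [tauEntry] <;> ring

theorem tauEntry_zero : tauEntry 0 = 0 :=
  map_zero (AddMonoidHom.mk' tauEntry tauEntry_add)

theorem tauEntry_sum {ι : Type*} (s : Finset ι) (f : ι → Quaternion ℝ) :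
    tauEntry (∑ i ∈ s, f i) = ∑ i ∈ s, tauEntry (f i) :=
  map_sum (AddMonoidHom.mk' tauEntry tauEntry_add) f s

theorem det_tauEntry (x : Quaternion ℝ) :
    (tauEntry x).det = ((Quaternion.normSq x : ℝ) : ℂ) := by
  rw [Matrix.det_fin_two, Quaternion.normSq_def']
  simp [tauEntry]
  ring_nf
  simp [Complex.I_sq]
  ring

theorem tau_mul {ι κ μ : Type*} [Fintype κ] (A : Matrix ι κ (Quaternion ℝ))
    (B : Matrix κ μ (Quaternion ℝ)) : tau (A * B) = tau A * tau B := by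
  ext ⟨i, r⟩ ⟨k, s⟩
  simp [tau, Matrix.mul_apply, tauEntry_sum, tauEntry_mul, Matrix.sum_apply, Fintype.sum_prod_type]

theorem tau_fromBlocks {ι κ μ ν : Type*} (A : Matrix ι μ (Quaternion ℝ))
    (B : Matrix ι ν (Quaternion ℝ)) (C : Matrix κ μ (Quaternion ℝ)) (D : Matrix κ ν (Quaternion ℝ)) :
    tau (Matrix.fromBlocks A B C D) =
      (Matrix.fromBlocks (tau A) (tau B) (tau C) (tau D)).submatrix
        (Equiv.sumProdDistrib ι κ (Fin 2)) (Equiv.sumProdDistrib μ ν (Fin 2)) := by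
  ext ⟨i | i, r⟩ ⟨k | k, s⟩ <;> simp [tau]

theorem tau_zero {ι κ : Type*} : tau (0 : Matrix ι κ (Quaternion ℝ)) = 0 := by
  ext ⟨i, r⟩ ⟨k, s⟩
  simp [tau, tauEntry_zero]

theorem det_tau_diagonal {ι : Type*} [Fintype ι] [DecidableEq ι] (v : ι → Quaternion ℝ) :
    (tau (Matrix.diagonal v)).det = ∏ i, ((Quaternion.normSq (v i) : ℝ) : ℂ) := by
  have h : tau (Matrix.diagonal v) =
      (Matrix.blockDiagonal fun i => tauEntry (v i)).submatrix
        (Equiv.prodComm ι (Fin 2)) (Equiv.prodComm ι (Fin 2)) := by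
    ext ⟨i, r⟩ ⟨k, s⟩
    by_cases hik : i = k
    · subst hik
      simp [tau]
    · simp [tau, Matrix.blockDiagonal_apply, hik, tauEntry_zero]
  rw [h, Matrix.det_submatrix_equiv_self, Matrix.det_blockDiagonal]
  simp [det_tauEntry]

theorem det_tau_one {ι : Type*} [Fintype ι] [DecidableEq ι] :
    (tau (1 : Matrix ι ι (Quaternion ℝ))).det = 1 := by
  rw [← Matrix.diagonal_one, det_tau_diagonal]
  simp

/-- Block elimination: if `y` is the image of `q`, then `G` is reduced by unipotent factors on both
sides to a block triangular matrix with diagonal blocks `a + b⬝q` and `d - y b`. -/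
theorem det_tau_fromBlocks {n : ℕ} (a : Quaternion ℝ) (b c q y : Fin n → Quaternion ℝ)
    (d : Matrix (Fin n) (Fin n) (Quaternion ℝ))
    (hy : ∀ i, y i * (a + ∑ j, b j * q j) = c i + ∑ j, d i j * q j) :
    (tau (Matrix.fromBlocks (scal a) (rowOf b) (colOf c) d)).det =
      ((Quaternion.normSq (a + ∑ j, b j * q j) : ℝ) : ℂ) *
        (tau (Matrix.of fun i j => d i j - y i * b j)).det := by
  have key : Matrix.fromBlocks 1 0 (colOf (-y)) 1 *
      (Matrix.fromBlocks (scal a) (rowOf b) (colOf c) d * Matrix.fromBlocks 1 0 (colOf q) 1) =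
      Matrix.fromBlocks (scal (a + ∑ j, b j * q j)) (rowOf b) 0
        (Matrix.of fun i j => d i j - y i * b j) := by
    rw [Matrix.fromBlocks_multiply, Matrix.fromBlocks_multiply]
    congr 1
    · refine Matrix.ext fun i j => ?_
      simp [scal, rowOf, colOf, Matrix.mul_apply]
    · refine Matrix.ext fun i j => ?_
      simp [rowOf]
    · refine Matrix.ext fun i j => ?_
      have := hy i
      simp only [mul_add, Finset.mul_sum] at this
      simp [scal, rowOf, colOf, Matrix.mul_apply, mul_add, Finset.mul_sum]
      rw [← this]
      abel
    · refine Matrix.ext fun i j => ?_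
      simp [rowOf, colOf, Matrix.mul_apply]
      abel
  have hscal : scal (a + ∑ j, b j * q j) =
      Matrix.diagonal fun _ => (a + ∑ j, b j * q j) := by
    refine Matrix.ext fun i j => ?_
    simp [scal, Subsingleton.elim i j]
  have hdet := congrArg (fun A => (tau A).det) key
  simpa [tau_mul, tau_fromBlocks, tau_zero, Matrix.det_submatrix_equiv_self, det_tau_one,
    Matrix.det_fromBlocks_zero₁₂, Matrix.det_fromBlocks_zero₂₁, Matrix.submatrix_mul_equiv,
    Matrix.det_mul, hscal,
    det_tau_diagonal] using hdet

/-- The real-linear identification of `ℍⁿ` with `ℂ²ⁿ` sending `h` to the first column of the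
complex matrix `τ(h)`. It turns left multiplication by `M` into multiplication by `τ(M)`. -/
noncomputable def colEquiv (n : ℕ) : (Fin n → Quaternion ℝ) ≃ₗ[ℝ] (Fin n × Fin 2 → ℂ) where
  toFun h r := tauEntry (h r.1) r.2 0
  invFun z j := ⟨(z (j, 0)).re, -(z (j, 0)).im, (z (j, 1)).re, (z (j, 1)).im⟩
  map_add' h k := by
    ext r : 1
    simp [tauEntry_add]
  map_smul' t h := by
    ext ⟨i, r⟩ : 1
    fin_cases r <;> simp [tauEntry] <;> ring
  left_inv h := by
    ext i <;> simp [tauEntry]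
  right_inv z := by
    ext ⟨i, r⟩ : 1
    fin_cases r <;> apply Complex.ext <;> simp [tauEntry]

theorem colEquiv_apply (n : ℕ) (h : Fin n → Quaternion ℝ) (r : Fin n × Fin 2) :
    colEquiv n h r = tauEntry (h r.1) r.2 0 := rfl

/-- Left multiplication `h ↦ M h` on column vectors of quaternions, as a real-linear map. -/
noncomputable def leftMul {n : ℕ} (M : Matrix (Fin n) (Fin n) (Quaternion ℝ)) :
    (Fin n → Quaternion ℝ) →ₗ[ℝ] (Fin n → Quaternion ℝ) where
  toFun h i := ∑ j, M i j * h j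
  map_add' h k := by
    ext i : 1
    simp [mul_add, Finset.sum_add_distrib]
  map_smul' t h := by
    ext i : 1
    simp [Finset.smul_sum]

/-- In the coordinates `colEquiv` the map is complex-linear with matrix `τ(M)`, and the real
determinant of a complex-linear map is the squared modulus of the complex one. -/
theorem det_leftMul {n : ℕ} (M : Matrix (Fin n) (Fin n) (Quaternion ℝ)) :
    LinearMap.det (leftMul M) = Complex.normSq (tau M).det := by
  have h : (colEquiv n).toLinearMap ∘ₗ leftMul M ∘ₗ (colEquiv n).symm.toLinearMap =
      (Matrix.toLin' (tau M)).restrictScalars ℝ := by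
    refine LinearMap.ext fun z => ?_
    obtain ⟨h, rfl⟩ := (colEquiv n).surjective z
    ext ⟨i, r⟩ : 1
    simp [colEquiv_apply, leftMul, tau, Matrix.mulVec, dotProduct, tauEntry_sum, tauEntry_mul,
      Matrix.sum_apply, Fintype.sum_prod_type, Matrix.mul_apply]
  rw [← LinearMap.det_conj (leftMul M) (colEquiv n), h, LinearMap.det_restrictScalars,
    LinearMap.det_toLin', Algebra.norm_complex_eq]
  rfl

/-- Right multiplication `h ↦ h x` of column vectors by a quaternion, as a real-linear map. -/
noncomputable def rightMul (n : ℕ) (x : Quaternion ℝ) :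
    (Fin n → Quaternion ℝ) →ₗ[ℝ] (Fin n → Quaternion ℝ) where
  toFun h i := h i * x
  map_add' h k := by
    ext i : 1
    simp [add_mul]
  map_smul' t h := by
    ext i : 1
    simp

/-- Entrywise conjugation turns right multiplication by `x` into left multiplication by the
diagonal matrix with entries `star x`, so this reduces to `det_leftMul`. -/
theorem det_rightMul (n : ℕ) (x : Quaternion ℝ) :
    LinearMap.det (rightMul n x) = Quaternion.normSq x ^ (2 * n) := by
  let e : (Fin n → Quaternion ℝ) ≃ₗ[ℝ] (Fin n → Quaternion ℝ) :=
    { Equiv.mk (fun h i => star (h i)) (fun h i => star (h i)) (fun h => by simp)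
        (fun h => by simp) with
      map_add' := fun h k => by
        ext i : 1
        simp
      map_smul' := fun t h => by
        ext i : 1
        simp }
  have h : e.toLinearMap ∘ₗ rightMul n x ∘ₗ e.symm.toLinearMap =
      leftMul (Matrix.diagonal fun _ => star x) := by
    refine LinearMap.ext fun z => ?_
    obtain ⟨h, rfl⟩ := e.surjective z
    ext i : 1
    simp [e, rightMul, leftMul, Matrix.diagonal_apply]
  rw [← LinearMap.det_conj (rightMul n x) e, h, det_leftMul, det_tau_diagonal]
  simp [Quaternion.normSq_star, pow_mul, pow_two, mul_pow]

/-- The derivative at `q` is `h ↦ (d - y b) h (a + b⬝q)⁻¹`, where `y` is the image of `q`. -/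
theorem hasFDerivAt_qflt {n : ℕ} (a : Quaternion ℝ) (b c : Fin n → Quaternion ℝ)
    (d : Matrix (Fin n) (Fin n) (Quaternion ℝ)) (q : Fin n → Quaternion ℝ)
    (hq : a + ∑ j, b j * q j ≠ 0) :
    HasFDerivAt (qflt a b c d)
      (LinearMap.toContinuousLinearMap (rightMul n (a + ∑ j, b j * q j)⁻¹ ∘ₗ
        leftMul (Matrix.of fun i j => d i j - qflt a b c d q i * b j))) q := by
  have hlin : ∀ (x : Quaternion ℝ) (v : Fin n → Quaternion ℝ),
      HasFDerivAt (fun w : Fin n → Quaternion ℝ => x + ∑ j, v j * w j)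
        (∑ j, (ContinuousLinearMap.mul ℝ (Quaternion ℝ) (v j)) ∘L
          ContinuousLinearMap.proj (R := ℝ) (φ := fun _ : Fin n => Quaternion ℝ) j) q := by
    intro x v
    refine HasFDerivAt.const_add x (HasFDerivAt.fun_sum fun j _ => ?_)
    exact ((ContinuousLinearMap.mul ℝ (Quaternion ℝ) (v j)) ∘L
          ContinuousLinearMap.proj (R := ℝ) (φ := fun _ : Fin n => Quaternion ℝ) j).hasFDerivAt
  rw [hasFDerivAt_pi']
  intro i
  have hinv := (hasFDerivAt_inv' (𝕜 := ℝ) hq).comp q (hlin a b)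
  refine ((hlin (c i) (d i)).mul' hinv).congr_fderiv ?_
  ext1 h
  simp [rightMul, leftMul, qflt, sub_mul, Finset.sum_sub_distrib, mul_assoc, Finset.mul_sum,
    Finset.sum_mul]
  abel

/-- For a quaternionic block matrix `G = Matrix.fromBlocks a b c d` with `det τ(G) = 1`
and `a + b⬝q ≠ 0`, the quaternionic fractional linear transformation is ℝ-differentiable
at `q` and the determinant of its real Fréchet derivative equals
`(normSq (a + b⬝q))⁻¹ ^ (2n+2)` (this is the volume form transformation formula). -/
theorem det_fderiv_qflt {n : ℕ} (a : Quaternion ℝ) (b c : Fin n → Quaternion ℝ)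
    (d : Matrix (Fin n) (Fin n) (Quaternion ℝ)) (q : Fin n → Quaternion ℝ)
    (hG : (tau (Matrix.fromBlocks (scal a) (rowOf b) (colOf c) d)).det = 1)
    (hq : a + ∑ j, b j * q j ≠ 0) :
    DifferentiableAt ℝ (qflt a b c d) q ∧
      LinearMap.det ((fderiv ℝ (qflt a b c d) q).toLinearMap) =
        ((Quaternion.normSq (a + ∑ j, b j * q j) : ℝ))⁻¹ ^ (2 * n + 2) := by
  have hF := hasFDerivAt_qflt a b c d q hq
  refine ⟨hF.differentiableAt, ?_⟩
  rw [det_tau_fromBlocks a b c q (qflt a b c d q) d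
    fun i => by rw [qflt, mul_assoc, inv_mul_cancel₀ hq, mul_one]] at hG
  rw [hF.fderiv, LinearMap.coe_toContinuousLinearMap, LinearMap.det_comp, det_rightMul,
    det_leftMul, eq_inv_of_mul_eq_one_right hG, map_inv₀, map_inv₀, Complex.normSq_ofReal,
    pow_add, pow_two, mul_inv]
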